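/- arXiv:2003.05876 — 2 statements merged into one kernel-verified Lean document; each statement's English description precedes it below -/
import Mathlib

section
/- For every integer N ≥ 1 and for z = 1 as well as z = −1, the Bose–Hubbard Hamiltonian at its exceptional point is nilpotent of index exactly N: H_BH(z)^N = 0 while H_BH(z)^{N−1} ≠ 0. In particular its spectrum is fully degenerate (all N eigenvalues coincide at 0) and, for N ≥ 2, H_BH(±1) is not diagonalizable. -/
/-!
Conjugating `H_BH(z)`, `z = ±1`, by the diagonal matrix with entries `√(binom(n,k))·(iz)^k`,
where `n = N - 1`, turns it into `iz` times the difference operator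
`u ↦ ((n - k)(u (k+1) - u k) + k (u k - u (k-1)))`, which sends the function `k ↦ binom(k,q+1)` to
`(n - q)` times `k ↦ binom(k,q)` and kills constants.  Hence the vectors
`v_q k = √(binom(n,k))·(iz)^k·binom(k,q)`, `0 ≤ q ≤ n`, form a Jordan chain for `H_BH(z)`
(`HBH_mulVec_chain_zero`, `HBH_mulVec_chain_succ`).  They are a basis, because the matrix
`binom(k,q)` is lower unitriangular, so `H ^ N = 0`; and `H ^ n v_n = (iz)^n n! v_0 ≠ 0`.  A
nilpotent matrix of positive size has spectrum `{0}`, and a diagonalizable one is zero, which `H`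
is not when `n ≥ 1`.
-/

open Matrix Polynomial Finset

/-- off-diagonal coupling `√((N−1−k)(k+1))`. -/
noncomputable def gCoup (N k : ℕ) : ℝ := Real.sqrt (((N - 1 - k) * (k + 1) : ℕ))

/-- the non-Hermitian Bose–Hubbard Hamiltonian `H_BH(z)`. -/
noncomputable def HBH (N : ℕ) (z : ℂ) : Matrix (Fin N) (Fin N) ℂ :=
  fun k l =>
    if (k : ℕ) = (l : ℕ) then -Complex.I * (((N : ℤ) - 1 - 2 * (k : ℕ) : ℤ) : ℂ) * z
    else if (l : ℕ) = (k : ℕ) + 1 then (gCoup N k : ℂ)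
    else if (k : ℕ) = (l : ℕ) + 1 then (gCoup N l : ℂ)
    else 0

/-- the EP limit of the discrete anharmonic-oscillator Hamiltonian `H_AO`. -/
noncomputable def HAO (N : ℕ) : Matrix (Fin N) (Fin N) ℂ :=
  fun k l =>
    if (k : ℕ) = (l : ℕ) then -(((N : ℤ) - 1 - 2 * (k : ℕ) : ℤ) : ℂ)
    else if (l : ℕ) = (k : ℕ) + 1 then (gCoup N k : ℂ)
    else if (k : ℕ) = (l : ℕ) + 1 then -(gCoup N l : ℂ)
    else 0

/-- the nilpotent Jordan block `J`. -/
noncomputable def Jmat (N : ℕ) : Matrix (Fin N) (Fin N) ℂ :=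
  fun k l => if (l : ℕ) = (k : ℕ) + 1 then 1 else 0

/-- the Pascal-triangle matrix `P`. -/
noncomputable def Pmat (N : ℕ) : Matrix (Fin N) (Fin N) ℂ :=
  fun m q => ((N - 1 - (m : ℕ)).choose (q : ℕ) : ℂ)

/-- the diagonal factor `D` with `D_{k,k} = i^k·√(binom(N−1,k))`. -/
noncomputable def Dmat (N : ℕ) : Matrix (Fin N) (Fin N) ℂ :=
  Matrix.diagonal fun k => Complex.I ^ (k : ℕ) * (Real.sqrt ((N - 1).choose (k : ℕ)) : ℂ)

/-- the diagonal factor `G` with `G_{k,k} = (−i)^{N−1−k}·(N−1−k)!`. -/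
noncomputable def Gmat (N : ℕ) : Matrix (Fin N) (Fin N) ℂ :=
  Matrix.diagonal fun k => (-Complex.I) ^ (N - 1 - (k : ℕ)) * ((N - 1 - (k : ℕ)).factorial : ℂ)

/-- the Bose–Hubbard transition matrix `Q_BH = D·P·G`. -/
noncomputable def QBH (N : ℕ) : Matrix (Fin N) (Fin N) ℂ := Dmat N * Pmat N * Gmat N

/-- the diagonal factor `C` with `C_{k,k} = √(binom(N−1,k))`. -/
noncomputable def Cmat (N : ℕ) : Matrix (Fin N) (Fin N) ℂ :=
  Matrix.diagonal fun k => (Real.sqrt ((N - 1).choose (k : ℕ)) : ℂ)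

/-- the diagonal factor `F` with `F_{k,k} = (−1)^{N−1−k}·(N−1−k)!`. -/
noncomputable def Fmat (N : ℕ) : Matrix (Fin N) (Fin N) ℂ :=
  Matrix.diagonal fun k => (-1 : ℂ) ^ (N - 1 - (k : ℕ)) * ((N - 1 - (k : ℕ)).factorial : ℂ)

/-- the anharmonic-oscillator transition matrix `Q_AO = C·P·F`. -/
noncomputable def QAO (N : ℕ) : Matrix (Fin N) (Fin N) ℂ := Cmat N * Pmat N * Fmat N

/-- `β = −1 + i`. -/
noncomputable def betaC : ℂ := -1 + Complex.I

/-- the diagonal factor `B` with `B_{k,k} = (−β)^{−k}`. -/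
noncomputable def Bmat (N : ℕ) : Matrix (Fin N) (Fin N) ℂ :=
  Matrix.diagonal fun k => ((-betaC) ^ (k : ℕ))⁻¹

/-- the diagonal factor `A` with `A_{k,k} = β^k`. -/
noncomputable def Amat (N : ℕ) : Matrix (Fin N) (Fin N) ℂ :=
  Matrix.diagonal fun k => betaC ^ (k : ℕ)

/-- the upper-triangular real matrix `R` with
`R_{n,n+q} = √(binom(n+q,n)·binom(N−1−n,q))`. -/
noncomputable def Rmat (N : ℕ) : Matrix (Fin N) (Fin N) ℂ :=
  fun n k =>
    if (n : ℕ) ≤ (k : ℕ) then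
      (Real.sqrt (((k : ℕ).choose (n : ℕ)) * ((N - 1 - (n : ℕ)).choose ((k : ℕ) - (n : ℕ)))) : ℂ)
    else 0

/-- the transition-matrix product `S = B·R·A`. -/
noncomputable def Smat (N : ℕ) : Matrix (Fin N) (Fin N) ℂ := Bmat N * Rmat N * Amat N

/-- the discrete anharmonic-oscillator Hamiltonian `H_AO(γ)` with coupling parameter `γ`. -/
noncomputable def HAOg (N : ℕ) (γ : ℝ) : Matrix (Fin N) (Fin N) ℝ :=
  fun k l =>
    if (k : ℕ) = (l : ℕ) then -((N : ℝ) - 1 - 2 * (k : ℕ))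
    else if (l : ℕ) = (k : ℕ) + 1 then
      Real.sqrt ((((N - 1 - (k : ℕ)) * ((k : ℕ) + 1) : ℕ)) * (1 - γ))
    else if (k : ℕ) = (l : ℕ) + 1 then
      -Real.sqrt ((((N - 1 - (l : ℕ)) * ((l : ℕ) + 1) : ℕ)) * (1 - γ))
    else 0

/-- the exchange (parity) matrix `Π`. -/
noncomputable def PiMat (N : ℕ) : Matrix (Fin N) (Fin N) ℂ :=
  fun k l => if (k : ℕ) + (l : ℕ) = N - 1 then 1 else 0

/-- The vector `v_q` of the Jordan chain of `H_BH(z)` in dimension `n + 1`, for `c = iz`, extended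
to all indices `k : ℕ`. -/
noncomputable def chain (n : ℕ) (c : ℂ) (q k : ℕ) : ℂ :=
  (Real.sqrt (n.choose k) : ℂ) * c ^ k * (k.choose q : ℂ)

lemma gCoup_mul_sqrt_succ (n k : ℕ) :
    (gCoup (n + 1) k : ℂ) * (Real.sqrt (n.choose (k + 1)) : ℂ)
      = ((n - k : ℕ) : ℂ) * (Real.sqrt (n.choose k) : ℂ) := by
  have h : gCoup (n + 1) k * Real.sqrt (n.choose (k + 1))
      = ((n - k : ℕ) : ℝ) * Real.sqrt (n.choose k) := by
    unfold gCoup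
    rw [← Real.sqrt_mul (Nat.cast_nonneg _), ← Real.sqrt_sq (Nat.cast_nonneg (n - k)),
      ← Real.sqrt_mul (sq_nonneg _)]
    congr 1
    have := Nat.choose_succ_right_eq n k
    norm_cast
    simp only [Nat.add_sub_cancel]
    calc _ = (n - k) * (n.choose (k + 1) * (k + 1)) := by ring
      _ = _ := by rw [this]; ring
  exact_mod_cast h

lemma gCoup_mul_sqrt (n k : ℕ) :
    (gCoup (n + 1) k : ℂ) * (Real.sqrt (n.choose k) : ℂ)
      = ((k : ℂ) + 1) * (Real.sqrt (n.choose (k + 1)) : ℂ) := by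
  have h : gCoup (n + 1) k * Real.sqrt (n.choose k)
      = ((k + 1 : ℕ) : ℝ) * Real.sqrt (n.choose (k + 1)) := by
    unfold gCoup
    rw [← Real.sqrt_mul (Nat.cast_nonneg _), ← Real.sqrt_sq (Nat.cast_nonneg (k + 1)),
      ← Real.sqrt_mul (sq_nonneg _)]
    congr 1
    have := Nat.choose_succ_right_eq n k
    norm_cast
    simp only [Nat.add_sub_cancel]
    calc _ = (n.choose k * (n - k)) * (k + 1) := by ring
      _ = _ := by rw [← this]; ring
  exact_mod_cast h

/-- A row of `H_BH(z)` applied to a vector that is the restriction of `g : ℕ → ℂ`.  The term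
`g (k + 1)` does no harm in the last row, where `gCoup` vanishes; row `0` has no
subdiagonal term. -/
lemma HBH_mulVec_apply (n : ℕ) (z : ℂ) (g : ℕ → ℂ) (k : Fin (n + 1)) :
    (HBH (n + 1) z *ᵥ fun l => g l) k
      = -Complex.I * ((n : ℂ) - 2 * (k : ℕ)) * z * g k + gCoup (n + 1) k * g (k + 1)
        + (if (k : ℕ) = 0 then 0 else gCoup (n + 1) (k - 1) * g (k - 1)) := by
  obtain ⟨k, hk⟩ := k
  have hsum : (HBH (n + 1) z *ᵥ fun l => g l) ⟨k, hk⟩ = ∑ l ∈ Finset.range (n + 1),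
      ((if k = l then -Complex.I * ((n : ℂ) - 2 * (k : ℕ)) * z * g k else 0)
        + (if k + 1 = l then gCoup (n + 1) k * g (k + 1) else 0)
        + (if k - 1 = l then
            (if k = 0 then 0 else gCoup (n + 1) (k - 1) * g (k - 1)) else 0)) := by
    rw [← Fin.sum_univ_eq_sum_range (fun l =>
      ((if k = l then -Complex.I * ((n : ℂ) - 2 * (k : ℕ)) * z * g k else 0)
        + (if k + 1 = l then gCoup (n + 1) k * g (k + 1) else 0)
        + (if k - 1 = l then
            (if k = 0 then 0 else gCoup (n + 1) (k - 1) * g (k - 1)) else 0)))]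
    simp only [Matrix.mulVec, dotProduct]
    refine Finset.sum_congr rfl fun l _ => ?_
    obtain ⟨l, hl⟩ := l
    simp only [HBH]
    by_cases h1 : k = l
    · subst h1
      rcases k with _ | k <;> simp
    · by_cases h2 : l = k + 1
      · subst h2
        have : k - 1 ≠ k + 1 := by omega
        simp [this]
      · by_cases h3 : k = l + 1
        · subst h3
          have h4 : ¬ (l + 1 + 1 = l) := by omega
          simp [h2, h4]
        · have h4 : ¬ (k + 1 = l) := by omega
          by_cases h5 : k = 0
          · subst h5
            simp [h1, h2, h4]
          · have h6 : ¬ (k - 1 = l) := by omega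
            simp [h1, h2, h3, h4, h6]
  rw [hsum, Finset.sum_add_distrib, Finset.sum_add_distrib, Finset.sum_ite_eq, Finset.sum_ite_eq,
    Finset.sum_ite_eq, if_pos (Finset.mem_range.2 hk),
    if_pos (Finset.mem_range.2 (show k - 1 < n + 1 by omega))]
  congr 2
  split_ifs with h
  · rfl
  · have : n = k := by
      rw [Finset.mem_range] at h
      omega
    simp [gCoup, this]

/-- The conjugated operator: `H` acts on `√(binom(n,k))·c^k·u k` as `c` times a difference
operator on `u`, when `c = iz` and `z² = 1`. -/
lemma HBH_mulVec_weighted (n : ℕ) (z c : ℂ) (hc : c = Complex.I * z) (hz : z ^ 2 = 1) (u : ℕ → ℂ)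
    (k : Fin (n + 1)) :
    (HBH (n + 1) z *ᵥ fun l => (Real.sqrt (n.choose l) : ℂ) * c ^ (l : ℕ) * u l) k
      = c * ((Real.sqrt (n.choose k) : ℂ) * c ^ (k : ℕ) *
        (((n : ℂ) - (k : ℕ)) * (u (k + 1) - u k) + (k : ℕ) * (u k - u (k - 1)))) := by
  rw [HBH_mulVec_apply n z (fun l => (Real.sqrt (n.choose l) : ℂ) * c ^ (l : ℕ) * u l)]
  obtain ⟨k, hk⟩ := k
  have hc2 : c ^ 2 = -1 := by rw [hc, mul_pow, hz, Complex.I_sq]; ring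
  have e1 := gCoup_mul_sqrt_succ n k
  rw [Nat.cast_sub (by omega)] at e1
  have hcI : -Complex.I * ((n : ℂ) - 2 * (k : ℕ)) * z = -c * ((n : ℂ) - 2 * (k : ℕ)) := by
    rw [hc]; ring
  simp only [hcI]
  rcases k with _ | k
  · simp only [if_pos, pow_zero, zero_add, Nat.cast_zero] at *
    linear_combination c * u 1 * e1
  · have e2 := gCoup_mul_sqrt n k
    simp only [Nat.add_sub_cancel, Nat.succ_ne_zero, if_false] at *
    push_cast at *
    linear_combination c ^ (k + 1 + 1) * u (k + 1 + 1) * e1 + c ^ k * u k * e2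
      + ((k : ℂ) + 1) * (Real.sqrt (n.choose (k + 1)) : ℂ) * c ^ k * u k * hc2

lemma HBH_mulVec_chain_zero (n : ℕ) (z c : ℂ) (hc : c = Complex.I * z) (hz : z ^ 2 = 1) :
    (HBH (n + 1) z *ᵥ fun l => chain n c 0 l) = 0 := by
  funext k
  unfold chain
  rw [HBH_mulVec_weighted n z c hc hz (fun l => (l.choose 0 : ℂ))]
  simp

lemma HBH_mulVec_chain_succ (n q : ℕ) (z c : ℂ) (hc : c = Complex.I * z) (hz : z ^ 2 = 1) :
    (HBH (n + 1) z *ᵥ fun l => chain n c (q + 1) l)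
      = (c * ((n : ℂ) - q)) • fun l : Fin (n + 1) => chain n c q l := by
  funext k
  unfold chain
  rw [HBH_mulVec_weighted n z c hc hz (fun l => (l.choose (q + 1) : ℂ))]
  obtain ⟨k, hk⟩ := k
  simp only [Pi.smul_apply, smul_eq_mul]
  have h1 : ((k + 1).choose (q + 1) : ℂ) = k.choose q + k.choose (q + 1) := by
    exact_mod_cast Nat.choose_succ_succ k q
  have h2 : (k : ℂ) * ((k.choose (q + 1) : ℂ) - ((k - 1).choose (q + 1) : ℂ))
      = (k.choose q : ℂ) * ((k : ℂ) - q) := by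
    have h3 : (k.choose (q + 1) : ℂ) * (q + 1) = k.choose q * ((k : ℂ) - q) := by
      rcases le_or_gt q k with h | h
      · rw [← Nat.cast_sub h]
        exact_mod_cast Nat.choose_succ_right_eq k q
      · simp [Nat.choose_eq_zero_of_lt h, Nat.choose_eq_zero_of_lt (Nat.lt_succ_of_lt h)]
    rw [← h3]
    rcases k with _ | k
    · simp
    · have h4 : ((k + 1).choose (q + 1) : ℂ) = k.choose q + k.choose (q + 1) := by
        exact_mod_cast Nat.choose_succ_succ k q
      have h5 : ((k : ℂ) + 1) * k.choose q = (k + 1).choose (q + 1) * ((q : ℂ) + 1) := by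
        exact_mod_cast Nat.add_one_mul_choose_eq k q
      simp only [Nat.add_sub_cancel]
      push_cast
      linear_combination ((k : ℂ) + 1) * h4 + h5
  rw [h2, h1]
  ring

lemma HBH_pow_mulVec_chain (n : ℕ) (z c : ℂ) (hc : c = Complex.I * z) (hz : z ^ 2 = 1) (q : ℕ) :
    (HBH (n + 1) z ^ (q + 1) *ᵥ fun l => chain n c q l) = 0 := by
  induction q with
  | zero => simpa using HBH_mulVec_chain_zero n z c hc hz
  | succ q ih =>
    rw [pow_succ, ← Matrix.mulVec_mulVec, HBH_mulVec_chain_succ n q z c hc hz,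
      Matrix.mulVec_smul, ih, smul_zero]

lemma HBH_pow_mulVec_chain_ne_zero (n : ℕ) (z c : ℂ) (hc : c = Complex.I * z) (hz : z ^ 2 = 1)
    (q : ℕ) (hq : q ≤ n) :
    (HBH (n + 1) z ^ q *ᵥ fun l => chain n c q l) ≠ 0 := by
  induction q with
  | zero =>
    intro h
    have := congrFun h 0
    simp [chain] at this
  | succ q ih =>
    have hc0 : c ≠ 0 := by
      rintro rfl
      rcases mul_eq_zero.1 hc.symm with h | h
      · exact Complex.I_ne_zero h
      · simp [h] at hz
    have hnq : (n : ℂ) - q ≠ 0 := by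
      rw [sub_ne_zero]
      exact_mod_cast (show n ≠ q by omega)
    rw [pow_succ, ← Matrix.mulVec_mulVec, HBH_mulVec_chain_succ n q z c hc hz,
      Matrix.mulVec_smul]
    exact smul_ne_zero (mul_ne_zero hc0 hnq) (ih (by omega))

/-- The matrix whose columns are the chain vectors is lower triangular with nonzero diagonal. -/
lemma chain_det_ne_zero (n : ℕ) (c : ℂ) (hc : c ≠ 0) :
    (Matrix.of fun k q : Fin (n + 1) => chain n c q k).det ≠ 0 := by
  rw [Matrix.det_of_isLowerTriangular]
  · rw [Finset.prod_ne_zero_iff]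
    intro k _
    have hk : (0 : ℝ) < n.choose k := by
      exact_mod_cast Nat.choose_pos (Nat.lt_succ_iff.1 k.2)
    have : Real.sqrt (n.choose k) ≠ 0 := (Real.sqrt_pos.2 hk).ne'
    simp only [Matrix.of_apply, chain, Nat.choose_self, Nat.cast_one, mul_one]
    exact mul_ne_zero (by exact_mod_cast this) (pow_ne_zero _ hc)
  · intro k q hkq
    have : (k : ℕ) < q := by simpa using hkq
    simp [chain, Nat.choose_eq_zero_of_lt this]

lemma HBH_pow_eq_zero (n : ℕ) (z : ℂ) (hz : z ^ 2 = 1) : HBH (n + 1) z ^ (n + 1) = 0 := by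
  have hz0 : z ≠ 0 := by
    rintro rfl
    simp at hz
  have hdet := chain_det_ne_zero n (Complex.I * z) (mul_ne_zero Complex.I_ne_zero hz0)
  set V := Matrix.of fun k q : Fin (n + 1) => chain n (Complex.I * z) q k with hV
  have hmul : HBH (n + 1) z ^ (n + 1) * V = 0 := by
    ext k q
    have hcol : (HBH (n + 1) z ^ (n + 1) *ᵥ fun l => chain n (Complex.I * z) q l) = 0 := by
      have hexp : HBH (n + 1) z ^ (n + 1)
          = HBH (n + 1) z ^ (n - (q : ℕ)) * HBH (n + 1) z ^ ((q : ℕ) + 1) := by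
        rw [← pow_add]
        congr 1
        omega
      rw [hexp, ← Matrix.mulVec_mulVec, HBH_pow_mulVec_chain n z _ rfl hz, Matrix.mulVec_zero]
    exact congrFun hcol k
  have hunit : IsUnit V := (Matrix.isUnit_iff_isUnit_det _).2 (isUnit_iff_ne_zero.2 hdet)
  exact hunit.mul_left_eq_zero.1 hmul

/-- at `z = ±1` the Bose–Hubbard Hamiltonian is nilpotent of index
exactly `N`, its spectrum is `{0}`, and (for `N ≥ 2`) it is not diagonalizable. -/
theorem bh_ep_nilpotent (N : ℕ) (hN : 1 ≤ N) (z : ℂ) (hz : z = 1 ∨ z = -1) :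
    HBH N z ^ N = 0 ∧ HBH N z ^ (N - 1) ≠ 0 ∧
      spectrum ℂ (HBH N z) = {0} ∧
      (2 ≤ N →
        ¬ ∃ (T : Matrix (Fin N) (Fin N) ℂ) (d : Fin N → ℂ),
          IsUnit T ∧ HBH N z = T * Matrix.diagonal d * T⁻¹) := by
  obtain ⟨n, rfl⟩ : ∃ n, N = n + 1 := ⟨N - 1, by omega⟩
  have hz2 : z ^ 2 = 1 := by rcases hz with rfl | rfl <;> norm_num
  have h0 := HBH_pow_eq_zero n z hz2
  have h1 : HBH (n + 1) z ^ n ≠ 0 := fun h =>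
    HBH_pow_mulVec_chain_ne_zero n z _ rfl hz2 n le_rfl (by rw [h, Matrix.zero_mulVec])
  refine ⟨h0, h1, ?_, ?_⟩
  · ext x
    rw [Set.mem_singleton_iff]
    constructor
    · intro hx
      have hx' := spectrum.pow_mem_pow _ (n + 1) hx
      rw [h0, spectrum.zero_eq, Set.mem_singleton_iff] at hx'
      exact pow_eq_zero_iff (Nat.succ_ne_zero n) |>.1 hx'
    · rintro rfl
      rw [spectrum.zero_mem_iff]
      intro hu
      have := hu.pow (n + 1)
      rw [h0] at this
      exact not_isUnit_zero this
  · rintro hN2 ⟨T, d, hT, hH⟩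
    have hdet : IsUnit T.det := (Matrix.isUnit_iff_isUnit_det T).1 hT
    have hconj : Matrix.diagonal d = T⁻¹ * HBH (n + 1) z * T := by
      rw [hH, ← Matrix.mul_assoc, ← Matrix.mul_assoc, Matrix.nonsing_inv_mul _ hdet,
        Matrix.one_mul, Matrix.mul_assoc, Matrix.nonsing_inv_mul _ hdet, Matrix.mul_one]
    have hpow : ∀ m, Matrix.diagonal d ^ m = T⁻¹ * HBH (n + 1) z ^ m * T := by
      intro m
      induction m with
      | zero => simp [Matrix.nonsing_inv_mul _ hdet]
      | succ m ih =>
        rw [pow_succ, ih, hconj, pow_succ]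
        simp only [Matrix.mul_assoc]
        rw [Matrix.mul_nonsing_inv_cancel_left _ _ hdet]
    have hd : d = 0 := by
      have h := hpow (n + 1)
      rw [h0, Matrix.mul_zero, Matrix.zero_mul, Matrix.diagonal_pow] at h
      have h' : d ^ (n + 1) = 0 := Matrix.diagonal_eq_zero.1 h
      exact eq_zero_of_pow_eq_zero h'
    apply h1
    rw [hH, hd]
    simp [show n ≠ 0 by omega]
end

section
/- For every integer N ≥ 1, every complex number z and every complex number w with w² = 1 − z², the characteristic polynomial of H_BH(z) equals ∏_{k=0}^{N−1} (X − (N−1−2k)·w); i.e. the eigenvalues of the Bose–Hubbard Hamiltonian are (N−1−2k)·w, k = 0,…,N−1. -/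
/-!
Put `a = -i z` and `M = N - 1`. Rescaling the basis by the square roots of the binomial
coefficients `binom(M, k)` turns `H_BH(z)` into the matrix of the differential operator
`(1 - 2 a x - x²) d/dx + M (x + a)` acting on polynomials of degree at most `M`
(`bhRescaled`, `bh_rescale`). The translation `x ↦ x + r` with `r = w - a`, a root of
`1 - 2 a x - x²` because `w² = 1 + a²`, transforms this operator into
`-(2 w x + x²) d/dx + M (x + w)` (`bh_shift_poly`), whose matrix in the monomial basis is lower
triangular with diagonal entries `(M - 2 k) w` (`bhLower`). The translation matrix is unipotent,
so the conjugation is legitimate for every `w`, including the exceptional points `w = 0`.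
-/

open Matrix Polynomial Finset

/-- The matrix of `(1 - 2 a x - x²) d/dx + M (x + a)`, `M = N - 1`, on polynomials of degree
`< N`, in the monomial basis. -/
noncomputable def bhRescaled (N : ℕ) (a : ℂ) : Matrix (Fin N) (Fin N) ℂ :=
  fun k l =>
    (if (k : ℕ) = l then a * ((N : ℂ) - 1 - 2 * (l : ℕ)) else 0)
      + (if (k : ℕ) = (l : ℕ) + 1 then (N : ℂ) - 1 - (l : ℕ) else 0)
      + (if (l : ℕ) = (k : ℕ) + 1 then ((l : ℕ) : ℂ) else 0)

/-- The matrix of `-(2 w x + x²) d/dx + M (x + w)`, `M = N - 1`, on polynomials of degree `< N`,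
in the monomial basis. -/
noncomputable def bhLower (N : ℕ) (w : ℂ) : Matrix (Fin N) (Fin N) ℂ :=
  fun k l =>
    (if (k : ℕ) = l then ((N : ℂ) - 1 - 2 * (k : ℕ)) * w else 0)
      + (if (k : ℕ) = (l : ℕ) + 1 then (N : ℂ) - 1 - (l : ℕ) else 0)

/-- The matrix of the translation `p(x) ↦ p(x + r)` in the monomial basis. -/
noncomputable def bhShift (N : ℕ) (r : ℂ) : Matrix (Fin N) (Fin N) ℂ :=
  fun k l => ((X + C r) ^ (l : ℕ)).coeff (k : ℕ)

/-- The diagonal rescaling by `√(binom(N-1, k))`. -/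
noncomputable def bhDiag (N : ℕ) : Matrix (Fin N) (Fin N) ℂ :=
  Matrix.diagonal fun k => ((Real.sqrt ((N - 1).choose (k : ℕ)) : ℝ) : ℂ)

lemma gCoup_mul_sqrt_choose (N k : ℕ) :
    Real.sqrt ((N - 1).choose k) * gCoup N k
      = (k + 1) * Real.sqrt ((N - 1).choose (k + 1)) := by
  have h : (((N - 1).choose (k + 1) : ℕ) : ℝ) * ((k + 1 : ℕ) : ℝ)
      = ((N - 1).choose k : ℕ) * ((N - 1 - k : ℕ) : ℝ) := by
    exact_mod_cast Nat.choose_succ_right_eq (N - 1) k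
  have hk : (0 : ℝ) ≤ k + 1 := by positivity
  rw [gCoup, ← Real.sqrt_mul (by positivity)]
  conv_rhs => rw [← Real.sqrt_sq hk]
  rw [← Real.sqrt_mul (by positivity)]
  congr 1
  push_cast at h ⊢
  linear_combination (-((k : ℝ) + 1)) * h

lemma gCoup_mul_sqrt_choose_succ (N k : ℕ) :
    Real.sqrt ((N - 1).choose (k + 1)) * gCoup N k
      = ((N - 1 - k : ℕ) : ℝ) * Real.sqrt ((N - 1).choose k) := by
  have h : (((N - 1).choose (k + 1) : ℕ) : ℝ) * ((k + 1 : ℕ) : ℝ)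
      = ((N - 1).choose k : ℕ) * ((N - 1 - k : ℕ) : ℝ) := by
    exact_mod_cast Nat.choose_succ_right_eq (N - 1) k
  have hk : (0 : ℝ) ≤ ((N - 1 - k : ℕ) : ℝ) := by positivity
  rw [gCoup, ← Real.sqrt_mul (by positivity)]
  conv_rhs => rw [← Real.sqrt_sq hk]
  rw [← Real.sqrt_mul (by positivity)]
  congr 1
  push_cast at h ⊢
  linear_combination (((N - 1 - k : ℕ) : ℝ)) * h

lemma bh_rescale (N : ℕ) (z : ℂ) :
    bhDiag N * HBH N z = bhRescaled N (-Complex.I * z) * bhDiag N := by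
  ext k l
  rw [bhDiag, Matrix.diagonal_mul, Matrix.mul_diagonal]
  obtain ⟨k, hk⟩ := k
  obtain ⟨l, hl⟩ := l
  simp only [HBH, bhRescaled]
  by_cases h1 : k = l
  · subst h1
    simp
    ring
  by_cases h2 : l = k + 1
  · subst h2
    have := congrArg (fun x : ℝ => (x : ℂ)) (gCoup_mul_sqrt_choose N k)
    simpa [show k ≠ k + 1 + 1 by omega] using this
  by_cases h3 : k = l + 1
  · subst h3
    have := congrArg (fun x : ℝ => (x : ℂ)) (gCoup_mul_sqrt_choose_succ N l)
    have e : ((N - 1 - l : ℕ) : ℂ) = (N : ℂ) - 1 - l := by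
      rw [Nat.cast_sub (by omega), Nat.cast_sub (by omega)]
      simp
    simp only [Complex.ofReal_mul, Complex.ofReal_natCast, e] at this
    simpa [show l ≠ l + 1 + 1 by omega] using this
  · simp [h1, h2, h3]

/-- The conjugation of the differential operator by the translation, evaluated on the monomial
`x ^ l`. -/
lemma bh_shift_poly (M a w : ℂ) (hw : w ^ 2 = 1 + a ^ 2) (l : ℕ) :
    C (a * (M - 2 * l)) * (X + C (w - a)) ^ l + C (M - l) * (X + C (w - a)) ^ (l + 1)
        + derivative ((X + C (w - a)) ^ l)
      = C (M * w) * (X + C (w - a)) ^ l + C M * (X * (X + C (w - a)) ^ l)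
        - C (2 * w) * (X * derivative ((X + C (w - a)) ^ l))
        - X * (X * derivative ((X + C (w - a)) ^ l)) := by
  have hC : (C w : ℂ[X]) ^ 2 = 1 + C a ^ 2 := by
    rw [← C_pow, hw]; simp
  cases l with
  | zero => simp; ring
  | succ l =>
    rw [derivative_X_add_C_pow]
    simp only [Nat.add_sub_cancel, map_mul, map_sub, map_add, C_ofNat, map_natCast,
      Nat.cast_add, Nat.cast_one, map_one]
    linear_combination (-((l : ℂ[X]) + 1) * (X + (C w - C a)) ^ l) * hC

lemma bh_shift (N : ℕ) (a w : ℂ) (hw : w ^ 2 = 1 + a ^ 2) :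
    bhShift N (w - a) * bhRescaled N a = bhLower N w * bhShift N (w - a) := by
  ext ⟨k, hk⟩ ⟨l, hl⟩
  have key := congrArg (fun p => coeff p k) (bh_shift_poly ((N : ℂ) - 1) a w hw l)
  have hL : (bhShift N (w - a) * bhRescaled N a) ⟨k, hk⟩ ⟨l, hl⟩
      = ((X + C (w - a)) ^ l).coeff k * (a * ((N : ℂ) - 1 - 2 * l))
        + ((X + C (w - a)) ^ (l + 1)).coeff k * ((N : ℂ) - 1 - l)
        + (derivative ((X + C (w - a)) ^ l)).coeff k := by
    simp only [Matrix.mul_apply, bhShift, bhRescaled]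
    rw [Fin.sum_univ_eq_sum_range (fun j => ((X + C (w - a) : ℂ[X]) ^ j).coeff k *
      ((if j = l then a * ((N : ℂ) - 1 - 2 * l) else 0)
      + (if j = l + 1 then (N : ℂ) - 1 - l else 0)
      + (if l = j + 1 then (l : ℂ) else 0))) N]
    simp only [mul_add, Finset.sum_add_distrib, mul_ite, mul_zero, Finset.sum_ite_eq',
      Finset.mem_range, hl, if_true]
    congr 1
    · congr 1
      split_ifs with h
      · rfl
      · -- the last column: the coefficient `M - l` vanishes
        have : N = l + 1 := by omega
        subst this; simp
    · cases l with
      | zero => simp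
      | succ l =>
        simp only [Nat.add_right_cancel_iff, Finset.sum_ite_eq, Finset.mem_range,
          show l < N by omega, if_true, derivative_X_add_C_pow, Nat.add_sub_cancel]
        rw [coeff_C_mul]
        ring
  have hR : (bhLower N w * bhShift N (w - a)) ⟨k, hk⟩ ⟨l, hl⟩
      = ((N : ℂ) - 1 - 2 * k) * w * ((X + C (w - a)) ^ l).coeff k
        + ((N : ℂ) - k) * (X * (X + C (w - a)) ^ l).coeff k := by
    simp only [Matrix.mul_apply, bhShift, bhLower]
    rw [Fin.sum_univ_eq_sum_range (fun j =>
      ((if k = j then ((N : ℂ) - 1 - 2 * k) * w else 0)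
      + (if k = j + 1 then (N : ℂ) - 1 - j else 0)) * ((X + C (w - a) : ℂ[X]) ^ l).coeff j) N]
    simp only [add_mul, Finset.sum_add_distrib, ite_mul, zero_mul, Finset.sum_ite_eq,
      Finset.mem_range, hk, if_true]
    congr 1
    cases k with
    | zero => simp
    | succ k =>
      simp only [Nat.add_right_cancel_iff, Finset.sum_ite_eq, Finset.mem_range,
        show k < N by omega, if_true, coeff_X_mul]
      push_cast
      ring
  rw [hL, hR]
  simp only [coeff_add, coeff_sub, coeff_C_mul] at key
  generalize (X + C (w - a)) ^ l = p at *
  generalize (X + C (w - a)) ^ (l + 1) = q at *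
  have e1 : (X * derivative p).coeff k = k * p.coeff k := by
    cases k with
    | zero => simp
    | succ k => rw [coeff_X_mul, coeff_derivative]; push_cast; ring
  have e2 : (X * (X * derivative p)).coeff k = ((k : ℂ) - 1) * (X * p).coeff k := by
    rcases k with _ | _ | k
    · simp
    · simp [coeff_X_mul]
    · rw [coeff_X_mul, coeff_X_mul, coeff_X_mul, coeff_derivative]; push_cast; ring
  rw [e1, e2] at key
  linear_combination key

lemma bhShift_det (N : ℕ) (r : ℂ) : (bhShift N r).det = 1 := by
  have hup : (bhShift N r).BlockTriangular id := by
    intro k l hkl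
    apply coeff_eq_zero_of_natDegree_lt
    rw [natDegree_pow, natDegree_X_add_C, mul_one]
    exact hkl
  rw [Matrix.det_of_isUpperTriangular hup]
  apply Finset.prod_eq_one
  intro k _
  have h := ((monic_X_add_C r).pow (k : ℕ)).coeff_natDegree
  rwa [natDegree_pow, natDegree_X_add_C, mul_one] at h

lemma bhDiag_det_ne_zero (N : ℕ) : (bhDiag N).det ≠ 0 := by
  rw [bhDiag, Matrix.det_diagonal, Finset.prod_ne_zero_iff]
  intro k _
  have : 0 < (N - 1).choose (k : ℕ) := Nat.choose_pos (by omega)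
  rw [Complex.ofReal_ne_zero]
  positivity

lemma bhLower_charpoly (N : ℕ) (w : ℂ) :
    (bhLower N w).charpoly
      = ∏ k ∈ Finset.range N, (X - C ((((N : ℤ) - 1 - 2 * k : ℤ) : ℂ) * w)) := by
  have hup : (bhLower N w)ᵀ.BlockTriangular id := by
    intro k l hkl
    have : (l : ℕ) < k := hkl
    simp [bhLower, show (l : ℕ) ≠ k by omega, show (l : ℕ) ≠ k + 1 by omega]
  rw [← Matrix.charpoly_transpose, Matrix.charpoly_of_isUpperTriangular _ hup,
    ← Fin.prod_univ_eq_prod_range]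
  simp [bhLower]

/-- the characteristic polynomial of `H_BH(z)` is
`∏_{k=0}^{N−1} (X − (N−1−2k)·w)` whenever `w² = 1 − z²`. -/
theorem bh_charpoly (N : ℕ) (hN : 1 ≤ N) (z w : ℂ) (hw : w ^ 2 = 1 - z ^ 2) :
    (HBH N z).charpoly =
      ∏ k ∈ Finset.range N, (X - C ((((N : ℤ) - 1 - 2 * k : ℤ) : ℂ) * w)) := by
  set a : ℂ := -Complex.I * z with ha
  have hwa : w ^ 2 = 1 + a ^ 2 := by
    rw [hw, ha, mul_pow, neg_sq, Complex.I_sq]; ring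
  set P := bhShift N (w - a) * bhDiag N with hP
  have hconj : P * HBH N z = bhLower N w * P := by
    rw [hP, Matrix.mul_assoc, bh_rescale, ← Matrix.mul_assoc, bh_shift N a w hwa,
      Matrix.mul_assoc]
  have hunit : IsUnit P := by
    rw [Matrix.isUnit_iff_isUnit_det, hP, Matrix.det_mul, bhShift_det, one_mul]
    exact (bhDiag_det_ne_zero N).isUnit
  obtain ⟨U, hU⟩ := hunit
  rw [← hU] at hconj
  rw [← bhLower_charpoly, ← Matrix.charpoly_units_conj U (HBH N z), hconj, Matrix.mul_assoc,
    ← Matrix.coe_units_inv, Units.mul_inv, Matrix.mul_one]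
end
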